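/- Assume χ_p ≠ 0 and, in case p = 0, χ_0 ∈ {1} ∪ (ℂ \ ℤ). Then F̃_χ is irreducible: the only ℂ-subspaces of F̃ invariant under all the operators G⁺(i−1/2) and G⁻(i−1/2), i ∈ ℤ, are {0} and F̃. -/

import Mathlib

noncomputable section

/-- The fermionic Fock space `F`: it has basis indexed by pairs `(A, B)` of finite sets of
nonnegative integers, the pair `(A, B)` corresponding to the basis monomial
`Ψ⁺(−n₁−1/2)⋯Ψ⁺(−n_r−1/2)·Ψ⁻(−k₁−1/2)⋯Ψ⁻(−k_s−1/2)·𝟙` where `A = {n₁ > ⋯ > n_r}` and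
`B = {k₁ > ⋯ > k_s}`. -/
abbrev FockF : Type := (Finset ℕ × Finset ℕ) →₀ ℂ

/-- The vacuum vector `𝟙`. -/
def vac : FockF := Finsupp.single (∅, ∅) 1

/-- `(−1)^{#{a ∈ S : a > m}}`. -/
def sgn (S : Finset ℕ) (m : ℕ) : ℂ := (-1 : ℂ) ^ (S.filter fun a => m < a).card

/-- `Ψ⁺(−m−1/2)`: exterior multiplication (creation). -/
def psiPneg (m : ℕ) : Module.End ℂ FockF :=
  Finsupp.lsum ℂ fun AB : Finset ℕ × Finset ℕ => LinearMap.toSpanSingleton ℂ FockF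
    (if m ∈ AB.1 then 0 else sgn AB.1 m • Finsupp.single (insert m AB.1, AB.2) 1)

/-- `Ψ⁺(m+1/2)`: the odd contraction operator pairing with `Ψ⁻(−m−1/2)` (annihilation). -/
def psiPpos (m : ℕ) : Module.End ℂ FockF :=
  Finsupp.lsum ℂ fun AB : Finset ℕ × Finset ℕ => LinearMap.toSpanSingleton ℂ FockF
    (if m ∈ AB.2 then ((-1 : ℂ) ^ AB.1.card * sgn AB.2 m) • Finsupp.single (AB.1, AB.2.erase m) 1
     else 0)

/-- `Ψ⁻(−m−1/2)`: exterior multiplication (creation). -/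
def psiMneg (m : ℕ) : Module.End ℂ FockF :=
  Finsupp.lsum ℂ fun AB : Finset ℕ × Finset ℕ => LinearMap.toSpanSingleton ℂ FockF
    (if m ∈ AB.2 then 0
     else ((-1 : ℂ) ^ AB.1.card * sgn AB.2 m) • Finsupp.single (AB.1, insert m AB.2) 1)

/-- `Ψ⁻(m+1/2)`: the odd contraction operator pairing with `Ψ⁺(−m−1/2)` (annihilation). -/
def psiMpos (m : ℕ) : Module.End ℂ FockF :=
  Finsupp.lsum ℂ fun AB : Finset ℕ × Finset ℕ => LinearMap.toSpanSingleton ℂ FockF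
    (if m ∈ AB.1 then sgn AB.1 m • Finsupp.single (AB.1.erase m, AB.2) 1 else 0)

/-- `PsiP i` is the operator `Ψ⁺(i − 1/2)`, `i ∈ ℤ`. -/
def PsiP (i : ℤ) : Module.End ℂ FockF :=
  if i ≤ 0 then psiPneg (-i).toNat else psiPpos (i - 1).toNat

/-- `PsiM i` is the operator `Ψ⁻(i − 1/2)`, `i ∈ ℤ`. -/
def PsiM (i : ℤ) : Module.End ℂ FockF :=
  if i ≤ 0 then psiMneg (-i).toNat else psiMpos (i - 1).toNat

/-- `G⁺(i−1/2) = (λ − i)·Ψ⁺(i−1/2)`. -/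
def Gplus (lam : ℂ) (i : ℤ) : Module.End ℂ FockF := (lam - (i : ℂ)) • PsiP i

/-- The finite set of indices `k ≥ −p` for which `Ψ⁻(k+i−1/2)` can act nontrivially on the
basis monomial `AB`; outside of it all terms of the locally finite sum defining `G⁻` vanish. -/
def GminusIdx (p : ℕ) (i : ℤ) (AB : Finset ℕ × Finset ℕ) : Finset ℤ :=
  (Finset.Icc (-(p : ℤ)) (-i) ∪ AB.1.image fun a : ℕ => (a : ℤ) + 1 - i).filter
    fun k => -(p : ℤ) ≤ k

/-- `G⁻(i−1/2) = −i·Ψ⁻(i−1/2) + Σ_{k=−p}^∞ χ_{−k}·Ψ⁻(k+i−1/2)` (a locally finite sum). -/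
def Gminus (p : ℕ) (χ : ℤ → ℂ) (i : ℤ) : Module.End ℂ FockF :=
  (-(i : ℂ)) • PsiM i +
    Finsupp.lsum ℂ fun AB : Finset ℕ × Finset ℕ => LinearMap.toSpanSingleton ℂ FockF
      (∑ k ∈ GminusIdx p i AB, χ (-k) • PsiM (k + i) (Finsupp.single AB 1))

end

/-!
Call `Ψ±(r)` with `r > 0` annihilation operators and with `r < 0` creation operators. On a given
vector `Ψ⁻(j - 1/2)` vanishes for large `j`, and `G⁻(j + p - 1/2)` is a multiple of `Ψ⁻(j - 1/2)`
plus a combination of the `Ψ⁻(k - 1/2)` with `k > j`. The multiple is `χ_p` if `p > 0` and `χ_0 - j`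
if `p = 0`, which is nonzero except possibly for `j = 1`, where `Ψ⁻(1/2)` kills `F̃` anyway. Hence,
by descending induction on `j`, an invariant subspace `U` is stable under all `Ψ⁻(j - 1/2)`, and it
is stable under all `Ψ⁺(i - 1/2)` with `i ≠ 0`. If `U ≠ 0`, a nonzero vector of `U` with the least
number of particles is killed by all annihilation operators, hence is a multiple of the vacuum; the
creation operators then produce every basis monomial of `F̃` from it.
-/

open Filter Module.End

section WeightedMap

variable {R α β : Type*} [CommSemiring R]

/-- The linear map sending the basis vector `x` to `c x` times the basis vector `e x` if `P x`
holds, and to `0` otherwise. The annihilation operators on Fock space are of this form. -/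
noncomputable def weightedMap (P : α → Prop) [DecidablePred P] (c : α → R) (e : α → β) :
    (α →₀ R) →ₗ[R] (β →₀ R) :=
  Finsupp.lsum R fun x =>
    LinearMap.toSpanSingleton R (β →₀ R) (if P x then c x • Finsupp.single (e x) 1 else 0)

variable {P : α → Prop} [DecidablePred P] {c : α → R} {e : α → β} {v : α →₀ R}

lemma weightedMap_eq_sum :
    weightedMap P c e v = ∑ x ∈ v.support with P x, Finsupp.single (e x) (c x * v x) := by
  rw [weightedMap, Finsupp.lsum_apply, Finsupp.sum, Finset.sum_filter]
  refine Finset.sum_congr rfl fun x _ => ?_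
  split_ifs <;> simp [mul_comm]

lemma weightedMap_apply_of_injOn (he : Set.InjOn e {x | P x}) {x : α} (hx : P x) :
    weightedMap P c e v (e x) = c x * v x := by
  classical
  rw [weightedMap_eq_sum, Finsupp.finsetSum_apply, Finset.sum_eq_single x]
  · simp
  · intro y hy hyx
    exact Finsupp.single_eq_of_ne' fun h => hyx (he (Finset.mem_filter.1 hy).2 hx h)
  · intro hxv
    have hvx : v x = 0 := by simpa [hx] using hxv
    simp [hvx]

lemma exists_of_mem_support_weightedMap {y : β} (hy : y ∈ (weightedMap P c e v).support) :
    ∃ x ∈ v.support, P x ∧ e x = y := by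
  rw [weightedMap_eq_sum, Finsupp.mem_support_iff, Finsupp.finsetSum_apply] at hy
  obtain ⟨x, hx, hxy⟩ := Finset.exists_ne_zero_of_sum_ne_zero hy
  rw [Finset.mem_filter] at hx
  exact ⟨x, hx.1, hx.2, by_contra fun h => hxy (Finsupp.single_eq_of_ne' h)⟩

lemma weightedMap_eq_zero_iff [NoZeroDivisors R] (he : Set.InjOn e {x | P x})
    (hc : ∀ x, P x → c x ≠ 0) : weightedMap P c e v = 0 ↔ ∀ x ∈ v.support, ¬P x := by
  constructor
  · intro h x hx hPx
    have hcoeff := weightedMap_apply_of_injOn (c := c) (v := v) he hPx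
    rw [h] at hcoeff
    exact mul_ne_zero (hc x hPx) (Finsupp.mem_support_iff.1 hx) hcoeff.symm
  · intro h
    rw [weightedMap_eq_sum, Finset.filter_false_of_mem h, Finset.sum_empty]

lemma sup_support_weightedMap_lt {γ : Type*} [LinearOrder γ] [OrderBot γ] {d : α → γ}
    {d' : β → γ} (hd : ∀ x, P x → d' (e x) < d x) (hv : weightedMap P c e v ≠ 0) :
    (weightedMap P c e v).support.sup d' < v.support.sup d := by
  obtain ⟨y, hy, hsup⟩ :=
    Finset.exists_mem_eq_sup _ (Finsupp.support_nonempty_iff.2 hv) d'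
  obtain ⟨x, hx, hPx, rfl⟩ := exists_of_mem_support_weightedMap hy
  exact hsup ▸ (hd x hPx).trans_le (Finset.le_sup hx)

end WeightedMap

lemma forall_int_of_eventually_of_forall_gt {P : ℤ → Prop} (hP : ∀ᶠ j in atTop, P j)
    (hstep : ∀ j, (∀ k > j, P k) → P j) (j : ℤ) : P j := by
  by_contra hj
  obtain ⟨J, hJ⟩ := eventually_atTop.1 hP
  obtain ⟨m, hm, hmax⟩ := Int.exists_greatest_of_bdd (P := fun k => ¬P k)
    ⟨J, fun k hk => not_lt.1 fun hJk => hk (hJ k hJk.le)⟩ ⟨j, hj⟩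
  exact hm (hstep m fun k hk => by_contra fun hPk => hk.not_ge (hmax k hPk))

section Operators

variable {m : ℕ} {A B : Finset ℕ} {v : FockF}

lemma sgn_ne_zero (S : Finset ℕ) (m : ℕ) : sgn S m ≠ 0 :=
  pow_ne_zero _ (neg_ne_zero.2 one_ne_zero)

lemma PsiP_neg_natCast (m : ℕ) : PsiP (-m) = psiPneg m := by
  simp [PsiP]

lemma PsiM_neg_natCast (m : ℕ) : PsiM (-m) = psiMneg m := by
  simp [PsiM]

lemma PsiP_natCast_add_one (m : ℕ) : PsiP (m + 1) = psiPpos m := by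
  simp [PsiP, show ¬(m : ℤ) + 1 ≤ 0 by lia]

lemma PsiM_natCast_add_one (m : ℕ) : PsiM (m + 1) = psiMpos m := by
  simp [PsiM, show ¬(m : ℤ) + 1 ≤ 0 by lia]

lemma psiPneg_single (hm : m ∉ A) :
    psiPneg m (Finsupp.single (A, B) 1) = sgn A m • Finsupp.single (insert m A, B) 1 := by
  simp [psiPneg, hm]

lemma psiMneg_single (hm : m ∉ B) :
    psiMneg m (Finsupp.single (A, B) 1) =
      ((-1) ^ A.card * sgn B m) • Finsupp.single (A, insert m B) 1 := by
  simp [psiMneg, hm]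

lemma psiPpos_eq_weightedMap (m : ℕ) :
    psiPpos m = weightedMap (fun x : Finset ℕ × Finset ℕ => m ∈ x.2)
      (fun x => (-1) ^ x.1.card * sgn x.2 m) (fun x => (x.1, x.2.erase m)) :=
  rfl

lemma psiMpos_eq_weightedMap (m : ℕ) :
    psiMpos m = weightedMap (fun x : Finset ℕ × Finset ℕ => m ∈ x.1)
      (fun x => sgn x.1 m) (fun x => (x.1.erase m, x.2)) :=
  rfl

lemma psiPpos_eq_zero_iff : psiPpos m v = 0 ↔ ∀ x ∈ v.support, m ∉ x.2 := by
  refine weightedMap_eq_zero_iff ?_ fun x _ =>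
    mul_ne_zero (pow_ne_zero _ (neg_ne_zero.2 one_ne_zero)) (sgn_ne_zero x.2 m)
  intro x hx y hy hxy
  rw [Prod.mk.injEq] at hxy
  exact Prod.ext hxy.1 (Finset.erase_injOn' m hx hy hxy.2)

lemma psiMpos_eq_zero_iff : psiMpos m v = 0 ↔ ∀ x ∈ v.support, m ∉ x.1 := by
  refine weightedMap_eq_zero_iff ?_ fun x _ => sgn_ne_zero x.1 m
  intro x hx y hy hxy
  rw [Prod.mk.injEq] at hxy
  exact Prod.ext (Finset.erase_injOn' m hx hy hxy.1) hxy.2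

/-- The largest number of factors `Ψ±` in a monomial occurring in `v`, and `0` for `v = 0`. -/
def particleNumber (v : FockF) : ℕ :=
  v.support.sup fun x => x.1.card + x.2.card

lemma particleNumber_psiPpos_lt (h : psiPpos m v ≠ 0) :
    particleNumber (psiPpos m v) < particleNumber v := by
  refine sup_support_weightedMap_lt (fun x hx => ?_) h
  exact Nat.add_lt_add_left (Finset.card_erase_lt_of_mem hx) _

lemma particleNumber_psiMpos_lt (h : psiMpos m v ≠ 0) :
    particleNumber (psiMpos m v) < particleNumber v := by
  refine sup_support_weightedMap_lt (fun x hx => ?_) h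
  exact Nat.add_lt_add_right (Finset.card_erase_lt_of_mem hx) _

lemma eq_smul_vac (hP : ∀ m, psiPpos m v = 0) (hM : ∀ m, psiMpos m v = 0) :
    v = v (∅, ∅) • vac := by
  have hsupp : v.support ⊆ {(∅, ∅)} := fun x hx => by
    have h₁ : x.1 = ∅ :=
      Finset.eq_empty_of_forall_notMem fun m => psiMpos_eq_zero_iff.1 (hM m) x hx
    have h₂ : x.2 = ∅ :=
      Finset.eq_empty_of_forall_notMem fun m => psiPpos_eq_zero_iff.1 (hP m) x hx
    exact Finset.mem_singleton.2 (Prod.ext h₁ h₂)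
  rw [vac, Finsupp.smul_single_one]
  exact Finsupp.support_subset_singleton.1 hsupp

end Operators

section Irreducibility

variable {U : Submodule ℂ FockF}

lemma vac_mem_of_invariant_annihilation (hU : U ≠ ⊥) (hP : ∀ m, U ∈ (psiPpos m).invtSubmodule)
    (hM : ∀ m, U ∈ (psiMpos m).invtSubmodule) : vac ∈ U := by
  obtain ⟨v, ⟨hv, hv0⟩, hmin⟩ := exists_minimalFor_of_wellFoundedLT
    (fun v => v ∈ U ∧ v ≠ 0) particleNumber (U.ne_bot_iff.1 hU)
  have hPv : ∀ m, psiPpos m v = 0 := fun m => by_contra fun h =>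
    have hlt := particleNumber_psiPpos_lt h
    hlt.not_ge (hmin ⟨hP m hv, h⟩ hlt.le)
  have hMv : ∀ m, psiMpos m v = 0 := fun m => by_contra fun h =>
    have hlt := particleNumber_psiMpos_lt h
    hlt.not_ge (hmin ⟨hM m hv, h⟩ hlt.le)
  have hvac := eq_smul_vac hPv hMv
  have hcoeff : v (∅, ∅) ≠ 0 := fun h => hv0 (by rw [hvac, h, zero_smul])
  exact (U.smul_mem_iff hcoeff).1 (hvac ▸ hv)

lemma supported_le_of_invariant_creation {S T : Set ℕ} (hvac : vac ∈ U)
    (hP : ∀ m ∈ S, U ∈ (psiPneg m).invtSubmodule) (hM : ∀ m ∈ T, U ∈ (psiMneg m).invtSubmodule) :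
    Finsupp.supported ℂ ℂ {x : Finset ℕ × Finset ℕ | ↑x.1 ⊆ S ∧ ↑x.2 ⊆ T} ≤ U := by
  have hminus (B : Finset ℕ) (hB : ↑B ⊆ T) : Finsupp.single (∅, B) 1 ∈ U := by
    induction B using Finset.induction_on with
    | empty => exact hvac
    | insert m B hm ih =>
      rw [Finset.coe_insert, Set.insert_subset_iff] at hB
      have h : psiMneg m (Finsupp.single (∅, B) 1) ∈ U := hM m hB.1 (ih hB.2)
      rw [psiMneg_single hm] at h
      exact (U.smul_mem_iff (by simp [sgn_ne_zero])).1 h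
  have hboth (A B : Finset ℕ) (hA : ↑A ⊆ S) (hB : ↑B ⊆ T) : Finsupp.single (A, B) 1 ∈ U := by
    induction A using Finset.induction_on with
    | empty => exact hminus B hB
    | insert m A hm ih =>
      rw [Finset.coe_insert, Set.insert_subset_iff] at hA
      have h : psiPneg m (Finsupp.single (A, B) 1) ∈ U := hP m hA.1 (ih hA.2)
      rw [psiPneg_single hm] at h
      exact (U.smul_mem_iff (sgn_ne_zero A m)).1 h
  rw [Finsupp.supported_eq_span_single, Submodule.span_le]
  rintro _ ⟨x, ⟨hA, hB⟩, rfl⟩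
  exact hboth x.1 x.2 hA hB

lemma ker_psiMpos (m : ℕ) :
    LinearMap.ker (psiMpos m) = Finsupp.supported ℂ ℂ
      {x : Finset ℕ × Finset ℕ | ↑x.1 ⊆ ({m}ᶜ : Set ℕ) ∧ ↑x.2 ⊆ (Set.univ : Set ℕ)} := by
  ext v
  simp [psiMpos_eq_zero_iff, Finsupp.mem_supported, Set.subset_def]

theorem ker_PsiM_le_of_invariant (m : ℕ) (hU : U ≠ ⊥)
    (hP : ∀ i : ℤ, i ≠ -m → U ∈ (PsiP i).invtSubmodule)
    (hM : ∀ j : ℤ, U ∈ (PsiM j).invtSubmodule) : LinearMap.ker (PsiM (m + 1)) ≤ U := by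
  have hvac : vac ∈ U := vac_mem_of_invariant_annihilation hU
    (fun n => PsiP_natCast_add_one n ▸ hP (n + 1) (by lia))
    (fun n => PsiM_natCast_add_one n ▸ hM (n + 1))
  rw [PsiM_natCast_add_one, ker_psiMpos]
  refine supported_le_of_invariant_creation hvac (fun n hn => ?_) fun n _ => ?_
  · rw [Set.mem_compl_singleton_iff] at hn
    exact PsiP_neg_natCast n ▸ hP (-n) (by lia)
  · exact PsiM_neg_natCast n ▸ hM (-n)

end Irreducibility

section Triangularity

variable {p : ℕ} {χ : ℤ → ℂ} {U : Submodule ℂ FockF} {v : FockF}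

lemma PsiM_single_eq_zero {j : ℤ} (hj : 0 < j) {x : Finset ℕ × Finset ℕ}
    (hx : ∀ a ∈ x.1, (a : ℤ) + 1 ≠ j) (c : ℂ) : PsiM j (Finsupp.single x c) = 0 := by
  obtain ⟨m, rfl⟩ : ∃ m : ℕ, j = m + 1 := ⟨(j - 1).toNat, by lia⟩
  have hm : m ∉ x.1 := fun hm => hx m hm rfl
  simp [PsiM_natCast_add_one, psiMpos, hm]

lemma PsiM_apply_eventually_eq_zero (v : FockF) : ∀ᶠ j in atTop, PsiM j v = 0 := by
  induction v using Finsupp.induction_linear with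
  | zero => simp
  | add f g hf hg =>
    filter_upwards [hf, hg] with j hf hg
    rw [map_add, hf, hg, add_zero]
  | single x c =>
    filter_upwards [eventually_gt_atTop ((x.1.sup id : ℕ) + 1 : ℤ)] with j hj
    refine PsiM_single_eq_zero (by lia) (fun a ha => ?_) c
    have hle : a ≤ x.1.sup id := Finset.le_sup (f := id) ha
    lia

lemma Gminus_single (p : ℕ) (χ : ℤ → ℂ) (i : ℤ) (x : Finset ℕ × Finset ℕ) (c : ℂ) :
    Gminus p χ i (Finsupp.single x c) = -(i : ℂ) • PsiM i (Finsupp.single x c) +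
      ∑ k ∈ GminusIdx p i x, χ (-k) • PsiM (k + i) (Finsupp.single x c) := by
  have hx : (Finsupp.single x c : FockF) = c • Finsupp.single x 1 := by simp
  simp [Gminus, hx, -Finsupp.smul_single, Finset.smul_sum, smul_comm c]

lemma Gminus_apply_eventually_eq (p : ℕ) (χ : ℤ → ℂ) (i : ℤ) (v : FockF) :
    ∀ᶠ N in atTop, Gminus p χ i v = -(i : ℂ) • PsiM i v +
      ∑ k ∈ Finset.Icc (-(p : ℤ)) N, χ (-k) • PsiM (k + i) v := by
  induction v using Finsupp.induction_linear with
  | zero => simp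
  | add f g hf hg =>
    filter_upwards [hf, hg] with N hf hg
    simp only [map_add, hf, hg, smul_add, Finset.sum_add_distrib]
    abel
  | single x c =>
    filter_upwards [eventually_ge_atTop ((x.1.sup id : ℕ) + 1 + |i|)] with N hN
    rw [Gminus_single]
    congr 1
    refine Finset.sum_subset (fun k hk => ?_) fun k hk hk' => ?_
    · simp only [GminusIdx, Finset.mem_filter, Finset.mem_union, Finset.mem_Icc,
        Finset.mem_image] at hk
      rw [Finset.mem_Icc]
      rcases hk with ⟨⟨-, hki⟩ | ⟨a, ha, rfl⟩, hpk⟩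
      · grind
      · have hle : a ≤ x.1.sup id := Finset.le_sup (f := id) ha
        grind
    · simp only [GminusIdx, Finset.mem_filter, Finset.mem_union, Finset.mem_Icc,
        Finset.mem_image, not_and] at hk hk'
      rw [PsiM_single_eq_zero, smul_zero]
      · by_contra hki
        exact hk' (.inl ⟨hk.1, by lia⟩) hk.1
      · exact fun a ha h => hk' (.inr ⟨a, ha, by lia⟩) hk.1

/-- The coefficient of `Ψ⁻(j - 1/2)` in `G⁻(j + p - 1/2)`. For `p = 0` the two summands in the
definition of `G⁻` contribute to it, for `p > 0` only the `χ`-part does. -/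
def leadingCoeff (p : ℕ) (χ : ℤ → ℂ) (j : ℤ) : ℂ :=
  χ p - if p = 0 then (j : ℂ) else 0

lemma leadingCoeff_ne_zero (hp : χ p ≠ 0)
    (h0 : p = 0 → (χ 0 = 1 ∨ ∀ n : ℤ, χ 0 ≠ (n : ℂ))) {j : ℤ} (hj : j ≠ 1) :
    leadingCoeff p χ j ≠ 0 := by
  rcases eq_or_ne p 0 with rfl | hp0
  · have hχj : χ 0 ≠ j := by
      rcases h0 rfl with h | h
      · rw [h]
        exact_mod_cast hj.symm
      · exact h j
    simpa [leadingCoeff, sub_eq_zero] using hχj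
  · simpa [leadingCoeff, hp0] using hp

lemma Gminus_sub_leadingCoeff_smul_mem {j : ℤ} (h : ∀ k > j, PsiM k v ∈ U) :
    Gminus p χ (j + p) v - leadingCoeff p χ j • PsiM j v ∈ U := by
  obtain ⟨N, hN, hpN⟩ := ((Gminus_apply_eventually_eq p χ (j + p) v).and
    (eventually_ge_atTop (-(p : ℤ)))).exists
  have htail : ∑ k ∈ Finset.Ioc (-(p : ℤ)) N, χ (-k) • PsiM (k + (j + p)) v ∈ U :=
    U.sum_mem fun k hk => by
      have hpk := (Finset.mem_Ioc.1 hk).1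
      exact U.smul_mem _ (h _ (by lia))
  rw [Finset.Icc_eq_cons_Ioc hpN, Finset.sum_cons, neg_neg, neg_add_cancel_comm_assoc] at hN
  rcases eq_or_ne p 0 with rfl | hp0
  · convert htail using 1
    rw [hN, leadingCoeff, if_pos rfl]
    simp only [Nat.cast_zero, add_zero]
    module
  · convert U.add_mem (U.smul_mem (-((j + p : ℤ) : ℂ)) (h (j + p) (by lia))) htail using 1
    rw [hN, leadingCoeff, if_neg hp0]
    module

theorem PsiM_mem_of_forall_Gminus_mem (hG : ∀ i, Gminus p χ i v ∈ U)
    (hv : ∀ j, leadingCoeff p χ j = 0 → PsiM j v ∈ U) : ∀ j, PsiM j v ∈ U := by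
  refine forall_int_of_eventually_of_forall_gt ?_ fun j hj => ?_
  · filter_upwards [PsiM_apply_eventually_eq_zero v] with j hj
    exact hj ▸ U.zero_mem
  · by_cases hlead : leadingCoeff p χ j = 0
    · exact hv j hlead
    · exact (U.smul_mem_iff hlead).1
        ((U.sub_mem_iff_right (hG (j + p))).1 (Gminus_sub_leadingCoeff_smul_mem hj))

end Triangularity

/-- Assume `χ_p ≠ 0` and, in case `p = 0`, `χ_0 ∈ {1} ∪ (ℂ \ ℤ)`.  Then
`F̃_χ` is irreducible: the only `ℂ`-subspaces of `F̃ = Ker_F Ψ⁻(1/2)` invariant under all the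
operators `G⁺(i−1/2) = −i·Ψ⁺(i−1/2)` and `G⁻(i−1/2)`, `i ∈ ℤ`, are `{0}` and `F̃`. -/
theorem statement5 (p : ℕ) (χ : ℤ → ℂ) (hχtop : ∀ j : ℤ, (p : ℤ) < j → χ j = 0)
    (hp : χ p ≠ 0) (h0 : p = 0 → (χ 0 = 1 ∨ ∀ n : ℤ, χ 0 ≠ (n : ℂ)))
    (U : Submodule ℂ FockF) (hsub : U ≤ LinearMap.ker (PsiM 1))
    (hU : ∀ i : ℤ, ∀ v ∈ U, ((-(i : ℂ)) • PsiP i) v ∈ U ∧ Gminus p χ i v ∈ U) :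
    U = ⊥ ∨ U = LinearMap.ker (PsiM 1) := by
  have hP (i : ℤ) (hi : i ≠ 0) : U ∈ (PsiP i).invtSubmodule := fun v hv => by
    have h : -(i : ℂ) • PsiP i v ∈ U := (hU i v hv).1
    exact (U.smul_mem_iff (neg_ne_zero.2 (Int.cast_ne_zero.2 hi))).1 h
  have hM (j : ℤ) : U ∈ (PsiM j).invtSubmodule := fun v hv => by
    refine PsiM_mem_of_forall_Gminus_mem (fun i => (hU i v hv).2) (fun k hk => ?_) j
    obtain rfl : k = 1 := by_contra fun hk1 => leadingCoeff_ne_zero hp h0 hk1 hk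
    exact LinearMap.mem_ker.1 (hsub hv) ▸ U.zero_mem
  refine or_iff_not_imp_left.2 fun hbot => hsub.antisymm ?_
  simpa using ker_PsiM_le_of_invariant 0 hbot (by simpa using hP) hM
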